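/- arXiv:2001.02120 — 2 statements merged into one kernel-verified Lean document; each statement's English description precedes it below -/
import Mathlib

section
/- For every n ∈ ℕ and k ∈ ℕ₀ the following holds. Let (g_j)_{j=0}^n be a 𝒟_q-tower of height n of the monomial function x ↦ x^k. Then (1/((−2)^n [n]_q!)) · q^{−n(n−1)/4} · g_n((q^{n/2} + q^{−n/2})/2) = q^n · [ 1/((q;q)_n)² + Σ_{j=1}^{n} (−1)^j q^{j(j−1)/2}(1 + q^j) / ((q;q)_{n−j}(q;q)_{n+j}) · ((q^j + q^{−j})/2)^k ]. Moreover, this quantity equals 0 whenever k < n, and for n = 0 the corresponding quantity g_0((q^0+q^0)/2)·1 equals 1 when k is arbitrary (i.e. T(k,0) = 1). -/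
/-!
Along the points `z = q^{m/2+b}` with `b ∈ ℕ`, the Askey-Wilson difference relation becomes the
Newton recursion for divided differences on the nodes `x_b = (q^b + q^{-b})/2`: with `s = √q` and
`z = s^{m+1+2b}`,
`x_{b+m+1} - x_b = (s^{m+1} - s^{-(m+1)}) (z - z⁻¹) / 2`.
Hence `g_m` at `q^{m/2+b}` equals `∏_{i=1}^m (s^i - s^{-i})/(s - s⁻¹)` times the divided difference
of `x ↦ x^k` on `x_b, …, x_{b+m}` (`tower_eval`). The prefactor is `q^{-m(m-1)/4} [m]_q!`
(`prefactor_eq`), so the quantity in question is, up to normalization, the divided difference on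
`x_0, …, x_n`. It vanishes for `k < n` (`divDiff_pow_eq_zero`), and its Lagrange form gives the
closed formula once the products `∏_{i ≠ j} (x_j - x_i)` are computed (`weight_eq`).
-/


open Filter

noncomputable section

/-- The q-Pochhammer symbol `(a;q)_n = ∏_{k=0}^{n-1} (1 - a q^k)` for real `a`, `q`. -/
def qPoch (q a : ℝ) (n : ℕ) : ℝ := ∏ k ∈ Finset.range n, (1 - a * q ^ k)

/-- The q-bracket `[n]_q = (1 - q^n)/(1 - q)`. -/
def qBracket (q : ℝ) (n : ℕ) : ℝ := (1 - q ^ n) / (1 - q)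

/-- The q-factorial `[n]_q! = ∏_{k=1}^n [k]_q`. -/
def qFactorial (q : ℝ) (n : ℕ) : ℝ := ∏ k ∈ Finset.Icc 1 n, qBracket q k

/-- `q^{1/2}` as a complex number. -/
def sqq (q : ℝ) : ℂ := (Real.sqrt q : ℂ)

/-- `g = 𝒟_q f`, the Askey-Wilson divided difference relation. -/
def IsAW (q : ℝ) (f g : ℂ → ℂ) : Prop :=
  ∀ z : ℂ, z ≠ 0 → z ≠ 1 → z ≠ -1 →
    g ((z + z⁻¹) / 2) =
      (f ((sqq q * z + (sqq q)⁻¹ * z⁻¹) / 2) - f (((sqq q)⁻¹ * z + sqq q * z⁻¹) / 2)) /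
        ((sqq q - (sqq q)⁻¹) * ((z - z⁻¹) / 2))

/-- The Askey-Wilson node `x_j = (q^j + q^{-j})/2`. -/
def awNode (q : ℝ) (j : ℕ) : ℝ := (q ^ j + q⁻¹ ^ j) / 2

/-- The divided difference of `t ↦ t ^ k` on the nodes `x_i`, `i ∈ S`, in its Lagrange form. -/
def divDiff (x : ℕ → ℝ) (k : ℕ) (S : Finset ℕ) : ℝ :=
  ∑ i ∈ S, x i ^ k / ∏ j ∈ S.erase i, (x i - x j)

/-! ### Divided differences -/

lemma divDiff_erase (x : ℕ → ℝ) (hx : Function.Injective x) (k : ℕ) (S : Finset ℕ) (a : ℕ)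
    (ha : a ∈ S) :
    divDiff x k (S.erase a) =
      ∑ i ∈ S, x i ^ k / (∏ j ∈ S.erase i, (x i - x j)) * (x i - x a) := by
  rw [divDiff, ← Finset.add_sum_erase S _ ha, sub_self, mul_zero, zero_add]
  refine Finset.sum_congr rfl fun i hi => ?_
  have hia : i ≠ a := Finset.ne_of_mem_erase hi
  have hne : x i - x a ≠ 0 := sub_ne_zero.mpr (hx.ne hia)
  have h : a ∈ S.erase i := Finset.mem_erase.mpr ⟨hia.symm, ha⟩
  rw [← Finset.mul_prod_erase _ _ h, Finset.erase_right_comm, div_mul_eq_mul_div, mul_comm (x i ^ k),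
    mul_div_mul_left _ _ hne]

/-- Newton's recursion for divided differences. -/
lemma divDiff_recursion (x : ℕ → ℝ) (hx : Function.Injective x) (k b m : ℕ) :
    divDiff x k (Finset.Ico (b + 1) (b + 1 + (m + 1))) - divDiff x k (Finset.Ico b (b + (m + 1))) =
      (x (b + (m + 1)) - x b) * divDiff x k (Finset.Ico b (b + (m + 1 + 1))) := by
  have h1 : Finset.Ico (b + 1) (b + 1 + (m + 1)) = (Finset.Ico b (b + (m + 1 + 1))).erase b := by
    ext i; simp only [Finset.mem_Ico, Finset.mem_erase]; lia
  have h2 : Finset.Ico b (b + (m + 1)) =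
      (Finset.Ico b (b + (m + 1 + 1))).erase (b + (m + 1)) := by
    ext i; simp only [Finset.mem_Ico, Finset.mem_erase]; lia
  rw [h1, h2, divDiff_erase x hx k _ _ (by simp), divDiff_erase x hx k _ _ (by simp),
    ← Finset.sum_sub_distrib, divDiff, Finset.mul_sum]
  exact Finset.sum_congr rfl fun i _ => by ring

lemma divDiff_pow_eq_zero (x : ℕ → ℝ) (hx : Function.Injective x) (k n : ℕ) (hk : k < n) :
    divDiff x k (Finset.range (n + 1)) = 0 := by
  have h := Lagrange.coeff_eq_sum (s := Finset.range (n + 1)) (v := x) hx.injOn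
    (P := (Polynomial.X : Polynomial ℝ) ^ k)
    (by rw [Polynomial.degree_X_pow, Finset.card_range]; exact_mod_cast (by lia : k < n + 1))
  rw [Finset.card_range, Nat.add_sub_cancel, Polynomial.coeff_X_pow, if_neg hk.ne'] at h
  simpa [divDiff] using h.symm

/-! ### The Askey-Wilson nodes -/

lemma awNode_sub_low (q : ℝ) (hq0 : 0 < q) (i d : ℕ) :
    (awNode q (i + d) - awNode q i) * (2 * q ^ (i + d)) =
      (1 - q ^ d) * (1 - q ^ (i + (i + d))) := by
  have h : q ≠ 0 := hq0.ne'
  simp only [awNode, inv_pow]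
  field_simp
  ring

lemma awNode_sub_high (q : ℝ) (hq0 : 0 < q) (j d : ℕ) :
    (awNode q j - awNode q (j + d)) * (-2 * q ^ (j + d)) =
      (1 - q ^ d) * (1 - q ^ (j + (j + d))) := by
  rw [← awNode_sub_low q hq0]
  ring

lemma awNode_injective (q : ℝ) (hq0 : 0 < q) (hq1 : q < 1) : Function.Injective (awNode q) := by
  refine StrictMono.injective (strictMono_nat_of_lt_succ fun i => ?_)
  have h := awNode_sub_low q hq0 i 1
  have h1 : q ^ (i + (i + 1)) < 1 := pow_lt_one₀ hq0.le hq1 (by lia)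
  have h2 : 0 < (1 - q ^ 1) * (1 - q ^ (i + (i + 1))) :=
    mul_pos (by linarith [pow_one q]) (by linarith)
  rw [← h] at h2
  linarith [pos_of_mul_pos_left h2 (by positivity)]

lemma qPoch_succ (q : ℝ) (n : ℕ) : qPoch q q (n + 1) = qPoch q q n * (1 - q ^ (n + 1)) := by
  rw [qPoch, Finset.prod_range_succ, ← qPoch, pow_succ' q n]

lemma qPoch_ne_zero (q : ℝ) (hq0 : 0 < q) (hq1 : q < 1) (n : ℕ) : qPoch q q n ≠ 0 := by
  refine Finset.prod_ne_zero_iff.mpr fun i _ => ?_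
  have h : q ^ (i + 1) < 1 := pow_lt_one₀ hq0.le hq1 (by lia)
  rw [← pow_succ']
  linarith

/-- The product `∏_{i < m} (x_j - x_i)`, `m ≤ j`, in denominator-free form: up to powers of `2` and
`q` it is `(q;q)_j (q;q)_{j+m-1} / ((q;q)_{j-m} (q;q)_{j-1})`. -/
lemma prod_low_aux (q : ℝ) (hq0 : 0 < q) (j m p : ℕ) (h : j = p + m) (hj : 0 < j) :
    (∏ i ∈ Finset.range m, (awNode q j - awNode q i)) * (2 ^ m * q ^ (j * m)) *
        (qPoch q q p * qPoch q q (j - 1)) =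
      qPoch q q j * qPoch q q (j - 1 + m) := by
  induction m generalizing p with
  | zero => simp [qPoch, h]
  | succ m ih =>
    have e := ih (p + 1) (by lia)
    have hlow := awNode_sub_low q hq0 m (p + 1)
    rw [show m + (p + 1) = j by lia] at hlow
    rw [qPoch_succ] at e
    rw [Finset.prod_range_succ, ← add_assoc, qPoch_succ, show j - 1 + m + 1 = m + j by lia,
      ← mul_assoc (qPoch q q j), ← e, pow_succ, mul_add, pow_add, mul_one]
    linear_combination (∏ i ∈ Finset.range m, (awNode q j - awNode q i)) * (2 ^ m * q ^ (j * m)) *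
        (qPoch q q p * qPoch q q (j - 1)) * hlow

/-- The factor `if j = 0 then 2 else 1` absorbs `1 + q ^ 0 = 2`: for `j > 0` the factor `1 + q ^ j`
comes from `(1 - q ^ (2 * j)) / (1 - q ^ j)`, which degenerates at `j = 0`. -/
lemma prod_low (q : ℝ) (hq0 : 0 < q) (hq1 : q < 1) (j : ℕ) :
    (∏ i ∈ Finset.range j, (awNode q j - awNode q i)) * (2 ^ j * q ^ (j * j)) * (1 + q ^ j) =
      (if j = 0 then 2 else 1) * qPoch q q (j + j) := by
  rcases j with _ | j
  · norm_num [qPoch]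
  · have e := prod_low_aux q hq0 (j + 1) (j + 1) 0 (by lia) (by lia)
    have hne : qPoch q q j ≠ 0 := qPoch_ne_zero q hq0 hq1 j
    have h0 : qPoch q q 0 = 1 := by simp [qPoch]
    rw [h0, Nat.add_sub_cancel, one_mul, qPoch_succ] at e
    rw [if_neg (by lia), one_mul, show j + 1 + (j + 1) = j + (j + 1) + 1 by lia, qPoch_succ]
    apply mul_right_cancel₀ hne
    rw [show j + (j + 1) + 1 = (j + 1) + (j + 1) by lia, pow_add q (j + 1) (j + 1)]
    linear_combination (1 + q ^ (j + 1)) * e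

lemma prod_high (q : ℝ) (hq0 : 0 < q) (j p : ℕ) :
    (∏ i ∈ Finset.range p, (awNode q j - awNode q (j + (i + 1)))) *
        ((-2) ^ p * q ^ (∑ i ∈ Finset.range p, (j + (i + 1)))) * qPoch q q (j + j) =
      qPoch q q p * qPoch q q (j + j + p) := by
  induction p with
  | zero => simp [qPoch]
  | succ p ih =>
    have h := awNode_sub_high q hq0 j (p + 1)
    rw [Finset.prod_range_succ, Finset.sum_range_succ, ← add_assoc (j + j), qPoch_succ, qPoch_succ,
      pow_add, pow_succ, show j + j + p + 1 = j + (j + (p + 1)) by lia]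
    linear_combination (1 - q ^ (p + 1)) * (1 - q ^ (j + (j + (p + 1)))) * ih +
      (∏ i ∈ Finset.range p, (awNode q j - awNode q (j + (i + 1)))) *
        ((-2) ^ p * q ^ (∑ i ∈ Finset.range p, (j + (i + 1)))) * qPoch q q (j + j) * h

lemma exponent_eq (j p : ℕ) :
    j * j + ∑ i ∈ Finset.range p, (j + (i + 1)) =
      (j + p) * (j + p - 1) / 2 + (j + p) + j * (j - 1) / 2 := by
  induction p with
  | zero =>
    rcases j with _ | j
    · simp
    · have h : 2 ∣ (j + 1) * j := (Nat.even_mul_pred_self (j + 1)).two_dvd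
      obtain ⟨c, hc⟩ := h
      simp only [Finset.range_zero, Finset.sum_empty, add_zero, Nat.add_sub_cancel, hc]
      rw [Nat.mul_div_cancel_left c (by norm_num)]
      nlinarith
  | succ p ih =>
    have h : (j + (p + 1)) * (j + (p + 1) - 1) / 2 = (j + p) * (j + p - 1) / 2 + (j + p) := by
      rw [← add_assoc, Nat.add_sub_cancel, ← Nat.add_mul_div_left _ _ (by norm_num : 0 < 2)]
      congr 1
      rcases j + p with _ | m
      · simp
      · simp only [Nat.add_sub_cancel]; ring
    rw [Finset.sum_range_succ, h]
    lia

/-- The product `∏_{i ≠ j} (x_j - x_i)` over `0 ≤ i ≤ n` in terms of `q`-Pochhammer symbols. -/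
lemma weight_eq (q : ℝ) (hq0 : 0 < q) (hq1 : q < 1) (n j : ℕ) (hj : j ≤ n) :
    (∏ i ∈ (Finset.range (n + 1)).erase j, (awNode q j - awNode q i)) *
        ((-2) ^ n * (-1) ^ j * q ^ (n * (n - 1) / 2 + n + j * (j - 1) / 2) * (1 + q ^ j)) =
      (if j = 0 then 2 else 1) * (qPoch q q (n - j) * qPoch q q (n + j)) := by
  obtain ⟨p, rfl⟩ := Nat.exists_eq_add_of_le hj
  have hsplit : ∏ i ∈ (Finset.range (j + p + 1)).erase j, (awNode q j - awNode q i) =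
      (∏ i ∈ Finset.range j, (awNode q j - awNode q i)) *
        ∏ i ∈ Finset.range p, (awNode q j - awNode q (j + (i + 1))) := by
    have hset : (Finset.range (j + p + 1)).erase j =
        Finset.range j ∪ Finset.Ico (j + 1) (j + p + 1) := by
      ext i; simp only [Finset.mem_erase, Finset.mem_range, Finset.mem_union, Finset.mem_Ico]; lia
    have hdisj : Disjoint (Finset.range j) (Finset.Ico (j + 1) (j + p + 1)) := by
      rw [Finset.disjoint_left]; intro i; simp only [Finset.mem_range, Finset.mem_Ico]; lia
    rw [hset, Finset.prod_union hdisj, Finset.prod_Ico_eq_prod_range,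
      show j + p + 1 - (j + 1) = p by lia]
    congr 1
    exact Finset.prod_congr rfl fun i _ => by rw [show j + 1 + i = j + (i + 1) by lia]
  have hl := prod_low q hq0 hq1 j
  have hh := prod_high q hq0 j p
  have hsign : (-2 : ℝ) ^ (j + p) * (-1) ^ j = 2 ^ j * (-2) ^ p := by
    rw [pow_add, mul_right_comm, ← mul_pow]; norm_num
  rw [hsplit, ← exponent_eq, hsign, pow_add q, Nat.add_sub_cancel_left,
    show j + p + j = j + j + p by lia]
  apply mul_right_cancel₀ (qPoch_ne_zero q hq0 hq1 (j + j))
  linear_combination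
    (∏ i ∈ Finset.range p, (awNode q j - awNode q (j + (i + 1)))) *
        ((-2) ^ p * q ^ (∑ i ∈ Finset.range p, (j + (i + 1)))) * qPoch q q (j + j) * hl +
      (if j = 0 then 2 else 1) * qPoch q q (j + j) * hh

/-! ### The tower along the points `q^{m/2+b}` -/

/-- The factor `∏_{i=1}^m (s^i - s^{-i})/(s - s⁻¹)`, a symmetric `q`-factorial with `q = s²`. -/
def towerFactor (s : ℝ) (m : ℕ) : ℝ :=
  ∏ i ∈ Finset.range m, (s ^ (i + 1) - s⁻¹ ^ (i + 1)) / (s - s⁻¹)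

lemma inv_gap_ne_zero (s : ℝ) (hs0 : 0 < s) (hs1 : s < 1) : s - s⁻¹ ≠ 0 := by
  have : 1 < s⁻¹ := (one_lt_inv₀ hs0).mpr hs1
  linarith

lemma awNode_sub_factor (s : ℝ) (hs0 : 0 < s) (b m : ℕ) :
    awNode (s ^ 2) (b + (m + 1)) - awNode (s ^ 2) b =
      (s ^ (m + 1) - s⁻¹ ^ (m + 1)) * ((s ^ (m + 1 + 2 * b) - (s ^ (m + 1 + 2 * b))⁻¹) / 2) := by
  have h : s ≠ 0 := hs0.ne'
  simp only [awNode, inv_pow, ← pow_mul]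
  field_simp
  ring

/-- Values of the tower at the points `q^{m/2+b}` are scaled divided differences. Each step of the
recursion evaluates the relation at a real point in `(0, 1)`, away from `0` and `±1`. -/
lemma tower_eval (s : ℝ) (hs0 : 0 < s) (hs1 : s < 1) (n k : ℕ) (g : ℕ → ℂ → ℂ)
    (hg0 : g 0 = fun x : ℂ => x ^ k)
    (htower : ∀ j, j < n → IsAW (s ^ 2) (g j) (g (j + 1))) (m : ℕ) (hm : m ≤ n) (b : ℕ) :
    g m (((s ^ (m + 2 * b) + (s ^ (m + 2 * b))⁻¹ : ℝ) : ℂ) / 2) =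
      ((towerFactor s m * divDiff (awNode (s ^ 2)) k (Finset.Ico b (b + (m + 1))) : ℝ) : ℂ) := by
  induction m generalizing b with
  | zero =>
    simp [hg0, towerFactor, divDiff, awNode, pow_mul]
  | succ m ih =>
    have hsne : s ≠ 0 := hs0.ne'
    have hinj := awNode_injective (s ^ 2) (by positivity) (pow_lt_one₀ hs0.le hs1 (by norm_num))
    have hsq : sqq (s ^ 2) = (s : ℂ) := by rw [sqq, Real.sqrt_sq hs0.le]
    set z : ℝ := s ^ (m + 1 + 2 * b) with hz
    have hz0 : 0 < z := by positivity
    have hz1 : z < 1 := pow_lt_one₀ hs0.le hs1 (by lia)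
    have h := htower m (by lia) (z : ℂ) (by exact_mod_cast hz0.ne') (by exact_mod_cast hz1.ne)
      (by exact_mod_cast (by linarith : z ≠ -1))
    rw [hsq] at h
    have e1 : ((s : ℂ) * z + (s : ℂ)⁻¹ * (z : ℂ)⁻¹) / 2 =
        ((s ^ (m + 2 * (b + 1)) + (s ^ (m + 2 * (b + 1)))⁻¹ : ℝ) : ℂ) / 2 := by
      have : s ^ (m + 2 * (b + 1)) = s * z := by rw [hz]; ring
      rw [this, mul_inv]; push_cast; rfl
    have e2 : ((s : ℂ)⁻¹ * z + (s : ℂ) * (z : ℂ)⁻¹) / 2 =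
        ((s ^ (m + 2 * b) + (s ^ (m + 2 * b))⁻¹ : ℝ) : ℂ) / 2 := by
      have : s ^ (m + 2 * b) = s⁻¹ * z := by
        rw [hz]; field_simp; ring
      rw [this, mul_inv, inv_inv]; push_cast; rfl
    rw [e1, e2, ih (by lia), ih (by lia)] at h
    have hrec := divDiff_recursion (awNode (s ^ 2)) hinj k b m
    rw [awNode_sub_factor s hs0, ← hz] at hrec
    have hg1 := inv_gap_ne_zero s hs0 hs1
    have hg2 := inv_gap_ne_zero z hz0 hz1
    have hreal : (towerFactor s m * divDiff (awNode (s ^ 2)) k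
          (Finset.Ico (b + 1) (b + 1 + (m + 1))) -
        towerFactor s m * divDiff (awNode (s ^ 2)) k (Finset.Ico b (b + (m + 1)))) /
          ((s - s⁻¹) * ((z - z⁻¹) / 2)) =
        towerFactor s (m + 1) *
          divDiff (awNode (s ^ 2)) k (Finset.Ico b (b + (m + 1 + 1))) := by
      rw [← mul_sub, hrec, towerFactor, towerFactor, Finset.prod_range_succ,
        div_eq_iff (mul_ne_zero hg1 (div_ne_zero hg2 two_ne_zero))]
      generalize s - s⁻¹ = u at hg1 ⊢
      generalize z - z⁻¹ = v
      field_simp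
    rw [← hreal]
    push_cast at h ⊢
    exact h

/-- The symmetric and the ordinary `q`-factorial differ by a power of `s = q^{1/2}`. -/
lemma prefactor_eq (s : ℝ) (hs0 : 0 < s) (hs1 : s < 1) (n : ℕ) :
    towerFactor s n * s ^ (n * (n - 1) / 2) = qFactorial (s ^ 2) n := by
  have hg := inv_gap_ne_zero s hs0 hs1
  have h1 : (1 : ℝ) - s ^ 2 ≠ 0 := by nlinarith
  induction n with
  | zero => simp [towerFactor, qFactorial]
  | succ n ih =>
    have hexp : (n + 1) * (n + 1 - 1) / 2 = n * (n - 1) / 2 + n := by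
      rw [← Finset.sum_range_id_mul_two, ← Finset.sum_range_id_mul_two,
        Nat.mul_div_cancel _ (by norm_num), Nat.mul_div_cancel _ (by norm_num),
        Finset.sum_range_succ]
    have hstep : (s ^ (n + 1) - s⁻¹ ^ (n + 1)) / (s - s⁻¹) * s ^ n = qBracket (s ^ 2) (n + 1) := by
      have h2 : s ≠ 0 := hs0.ne'
      rw [qBracket, div_mul_eq_mul_div, div_eq_div_iff hg h1, inv_pow]
      field_simp
      ring
    rw [qFactorial, Finset.prod_Icc_succ_top (by lia), ← qFactorial, ← ih, ← hstep, towerFactor,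
      Finset.prod_range_succ, ← towerFactor, hexp, pow_add]
    ring

lemma qFactorial_ne_zero (q : ℝ) (hq0 : 0 < q) (hq1 : q < 1) (n : ℕ) : qFactorial q n ≠ 0 := by
  refine Finset.prod_ne_zero_iff.mpr fun i hi => ?_
  have h : q ^ i < 1 := pow_lt_one₀ hq0.le hq1 (by have := Finset.mem_Icc.mp hi; lia)
  exact div_ne_zero (by linarith) (by linarith)

/-- The normalized divided difference on `x_0, …, x_n` in closed form. -/
lemma divDiff_closed_form (q : ℝ) (hq0 : 0 < q) (hq1 : q < 1) (n k : ℕ) :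
    divDiff (awNode q) k (Finset.range (n + 1)) / ((-2) ^ n * q ^ (n * (n - 1) / 2)) =
      q ^ n * (1 / qPoch q q n ^ 2 +
        ∑ j ∈ Finset.Icc 1 n, (-1 : ℝ) ^ j * q ^ (j * (j - 1) / 2) * (1 + q ^ j) /
          (qPoch q q (n - j) * qPoch q q (n + j)) * ((q ^ j + q⁻¹ ^ j) / 2) ^ k) := by
  have hterm : ∀ j ≤ n, awNode q j ^ k /
        (∏ i ∈ (Finset.range (n + 1)).erase j, (awNode q j - awNode q i)) /
          ((-2) ^ n * q ^ (n * (n - 1) / 2)) =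
      q ^ n * ((-1 : ℝ) ^ j * q ^ (j * (j - 1) / 2) * (1 + q ^ j) /
        ((if j = 0 then 2 else 1) * (qPoch q q (n - j) * qPoch q q (n + j))) *
          awNode q j ^ k) := by
    intro j hj
    have hw := weight_eq q hq0 hq1 n j hj
    have hP : ∏ i ∈ (Finset.range (n + 1)).erase j, (awNode q j - awNode q i) ≠ 0 :=
      Finset.prod_ne_zero_iff.mpr fun i hi =>
        sub_ne_zero.mpr ((awNode_injective q hq0 hq1).ne (Finset.ne_of_mem_erase hi).symm)
    have hq : q ≠ 0 := hq0.ne'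
    have hj1 : 1 + q ^ j ≠ 0 := by positivity
    have hm1 : (-1 : ℝ) ^ j ≠ 0 := pow_ne_zero _ (by norm_num)
    have hm2 : (-2 : ℝ) ^ n ≠ 0 := pow_ne_zero _ (by norm_num)
    rw [← hw, pow_add, pow_add]
    generalize (-1 : ℝ) ^ j = u at *
    generalize (-2 : ℝ) ^ n = v at *
    field_simp
  have hset : Finset.range (n + 1) = insert 0 (Finset.Icc 1 n) := by
    ext i; simp only [Finset.mem_range, Finset.mem_insert, Finset.mem_Icc]; lia
  rw [divDiff, Finset.sum_div, Finset.sum_congr rfl fun j hj =>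
      hterm j (Nat.lt_succ_iff.mp (Finset.mem_range.mp hj)), ← Finset.mul_sum, hset,
    Finset.sum_insert (by simp)]
  congr 2
  · have : awNode q 0 = 1 := by norm_num [awNode]
    rw [this]
    simp only [pow_zero, Nat.sub_zero, add_zero, if_true, one_pow, zero_mul, Nat.zero_div]
    rw [← sq]
    field_simp
    norm_num
  · refine Finset.sum_congr rfl fun j hj => ?_
    have : j ≠ 0 := by have := Finset.mem_Icc.mp hj; lia
    rw [if_neg this, one_mul, awNode]

theorem stmt0 (q : ℝ) (hq0 : 0 < q) (hq1 : q < 1) (n k : ℕ)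
    (g : ℕ → ℂ → ℂ) (hdiff : ∀ j, j ≤ n → Differentiable ℂ (g j))
    (hg0 : g 0 = fun x : ℂ => x ^ k)
    (htower : ∀ j, j < n → IsAW q (g j) (g (j + 1))) :
    (1 / ((-2 : ℂ) ^ n * (qFactorial q n : ℂ))) *
        ((q ^ (-((n * (n - 1) : ℕ) : ℝ) / 4) : ℝ) : ℂ) *
        g n (((q ^ ((n : ℝ) / 2) + q ^ (-(n : ℝ) / 2) : ℝ) : ℂ) / 2) =
      ((q ^ n * (1 / qPoch q q n ^ 2 +
        ∑ j ∈ Finset.Icc 1 n, (-1 : ℝ) ^ j * q ^ (j * (j - 1) / 2) * (1 + q ^ j) /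
          (qPoch q q (n - j) * qPoch q q (n + j)) * ((q ^ j + q⁻¹ ^ j) / 2) ^ k) : ℝ) : ℂ) ∧
    (k < n →
      (1 / ((-2 : ℂ) ^ n * (qFactorial q n : ℂ))) *
          ((q ^ (-((n * (n - 1) : ℕ) : ℝ) / 4) : ℝ) : ℂ) *
          g n (((q ^ ((n : ℝ) / 2) + q ^ (-(n : ℝ) / 2) : ℝ) : ℂ) / 2) = 0) ∧
    (n = 0 → g 0 1 * 1 = 1) := by
  obtain ⟨s, hs0, rfl⟩ : ∃ s : ℝ, 0 < s ∧ q = s ^ 2 :=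
    ⟨Real.sqrt q, Real.sqrt_pos.mpr hq0, (Real.sq_sqrt hq0.le).symm⟩
  have hs1 : s < 1 := by nlinarith
  have hsne : s ≠ 0 := hs0.ne'
  have heval := tower_eval s hs0 hs1 n k g hg0 htower n le_rfl 0
  rw [zero_add, ← Finset.range_eq_Ico, mul_zero, add_zero] at heval
  have hpt1 : (s ^ 2) ^ ((n : ℝ) / 2) = s ^ n := by
    rw [← Real.rpow_natCast s 2, ← Real.rpow_mul hs0.le, ← Real.rpow_natCast s n]
    congr 1; push_cast; ring
  have hpt2 : (s ^ 2) ^ (-(n : ℝ) / 2) = (s ^ n)⁻¹ := by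
    rw [neg_div, Real.rpow_neg (by positivity), hpt1]
  -- `n (n - 1)` is even, so the half-integer power of `q = s ^ 2` is an integer power of `s`.
  have hpow : (s ^ 2) ^ (-((n * (n - 1) : ℕ) : ℝ) / 4) = (s ^ (n * (n - 1) / 2))⁻¹ := by
    obtain ⟨c, hc⟩ := (Nat.even_mul_pred_self n).two_dvd
    rw [hc, Nat.mul_div_cancel_left c (by norm_num), neg_div, Real.rpow_neg (by positivity),
      ← Real.rpow_natCast s 2, ← Real.rpow_mul hs0.le, ← Real.rpow_natCast s c]
    congr 2; push_cast; ring
  have hpre := prefactor_eq s hs0 hs1 n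
  have hfac := qFactorial_ne_zero (s ^ 2) hq0 hq1 n
  have hkey : (1 / ((-2 : ℂ) ^ n * (qFactorial (s ^ 2) n : ℂ))) *
        (((s ^ 2) ^ (-((n * (n - 1) : ℕ) : ℝ) / 4) : ℝ) : ℂ) *
        g n ((((s ^ 2) ^ ((n : ℝ) / 2) + (s ^ 2) ^ (-(n : ℝ) / 2) : ℝ) : ℂ) / 2) =
      ((divDiff (awNode (s ^ 2)) k (Finset.range (n + 1)) /
        ((-2) ^ n * (s ^ 2) ^ (n * (n - 1) / 2)) : ℝ) : ℂ) := by
    rw [hpt1, hpt2, hpow, heval]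
    have hreal : 1 / ((-2) ^ n * qFactorial (s ^ 2) n) * (s ^ (n * (n - 1) / 2))⁻¹ *
        (towerFactor s n * divDiff (awNode (s ^ 2)) k (Finset.range (n + 1))) =
        divDiff (awNode (s ^ 2)) k (Finset.range (n + 1)) /
          ((-2) ^ n * (s ^ 2) ^ (n * (n - 1) / 2)) := by
      have hm2 : (-2 : ℝ) ^ n ≠ 0 := pow_ne_zero _ (by norm_num)
      rw [← pow_mul, mul_comm 2, pow_mul]
      rw [← hpre] at hfac ⊢
      have ht := left_ne_zero_of_mul hfac
      generalize (-2 : ℝ) ^ n = v at *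
      field_simp
    rw [← hreal]
    push_cast
    rfl
  refine ⟨?_, fun hk => ?_, fun _ => ?_⟩
  · rw [hkey, divDiff_closed_form (s ^ 2) hq0 hq1]
  · rw [hkey, divDiff_pow_eq_zero _ (awNode_injective (s ^ 2) hq0 hq1) k n hk, zero_div,
      Complex.ofReal_zero]
  · simp [hg0]
end
end

section
/- Define T(k,0) := 1 for every k ∈ ℕ₀, and for n ∈ ℕ and k ∈ ℕ₀ define T(k,n) := q^n · [ 1/((q;q)_n)² + Σ_{j=1}^{n} (−1)^j q^{j(j−1)/2}(1 + q^j) / ((q;q)_{n−j}(q;q)_{n+j}) · ((q^j + q^{−j})/2)^k ]. Then for every pair of positive integers k and n, T(k,n) = ((q^n + q^{−n})/2) · T(k−1,n) − (q^{1−n}/2) · T(k−1,n−1); and (−1)^n T(k,n) ≥ 0 for every pair of non-negative integers k and n. -/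
/-!
The bracket defining `T(k,n)` is a sum of weights times powers of `c_j = (q^j + q^{-j})/2`, `c_0 = 1`.
Since `c_n - c_j = q^{-n} (1 - q^{n-j}) (1 - q^{n+j}) / 2`, multiplying the weight with index `(n, j)`
by `c_j - c_n` gives a multiple of the weight with index `(n - 1, j)`, and kills the term `j = n`;
summing over `j` is the recurrence (`Tkn_succ`).

For the sign, `T(0,n) = 0` for `n ≥ 1`, because the partial sums of the bracket have a closed form
(`partial_sum`) with a factor `1 - q^{n-m}` vanishing at `m = n`. Both coefficients of the recurrence
for `(-1)^n T(k,n)` in terms of `(-1)^n T(k-1,n)` and `(-1)^{n-1} T(k-1,n-1)` are positive, so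
nonnegativity follows by induction on `k`.
-/

open Filter

noncomputable section

/-- The numbers `T(k,n)`: `T(k,0) = 1` and for `n ≥ 1`,
`T(k,n) = q^n [ 1/((q;q)_n)² + Σ_{j=1}^n (−1)^j q^{j(j−1)/2}(1+q^j)/((q;q)_{n−j}(q;q)_{n+j}) ((q^j+q^{−j})/2)^k ]`. -/
def Tkn (q : ℝ) (k n : ℕ) : ℝ :=
  if n = 0 then 1
  else
    q ^ n * (1 / qPoch q q n ^ 2 +
      ∑ j ∈ Finset.Icc 1 n, (-1 : ℝ) ^ j * q ^ (j * (j - 1) / 2) * (1 + q ^ j) /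
        (qPoch q q (n - j) * qPoch q q (n + j)) * ((q ^ j + q⁻¹ ^ j) / 2) ^ k)

lemma one_sub_pow_ne {q : ℝ} (hq0 : 0 < q) (hq1 : q < 1) (n : ℕ) : 1 - q ^ (n + 1) ≠ 0 := by
  have := pow_lt_one₀ hq0.le hq1 (Nat.succ_ne_zero n)
  exact (sub_pos.2 this).ne'

lemma qPoch_ne {q : ℝ} (hq0 : 0 < q) (hq1 : q < 1) (n : ℕ) : qPoch q q n ≠ 0 := by
  induction n with
  | zero => simp [qPoch]
  | succ n ih => rw [qPoch_succ]; exact mul_ne_zero ih (one_sub_pow_ne hq0 hq1 n)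

/-- The partial sums of the bracket in `T(0,n)`. -/
lemma partial_sum {q : ℝ} (hq0 : 0 < q) (hq1 : q < 1) (n m : ℕ) (hn : 1 ≤ n) (hm : m ≤ n) :
    1 / qPoch q q n ^ 2 +
      ∑ j ∈ Finset.Icc 1 m, (-1 : ℝ) ^ j * q ^ (j * (j - 1) / 2) * (1 + q ^ j) /
        (qPoch q q (n - j) * qPoch q q (n + j)) =
    (-1) ^ m * q ^ ((m + 1) * m / 2) * (1 - q ^ (n - m)) /
      (qPoch q q (n - m) * qPoch q q (n + m) * (1 - q ^ n)) := by
  have h1n : 1 - q ^ n ≠ 0 := by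
    obtain ⟨r, rfl⟩ := Nat.exists_eq_add_of_le' hn
    exact one_sub_pow_ne hq0 hq1 r
  induction m with
  | zero =>
    have := qPoch_ne hq0 hq1 n
    simp
    field_simp
  | succ m ih =>
    obtain ⟨d, rfl⟩ := Nat.exists_eq_add_of_le hm
    rw [Finset.sum_Icc_succ_top (by omega), ← add_assoc, ih (by omega)]
    have e1 : m + 1 + d - m = d + 1 := by omega
    have e2 : m + 1 + d - (m + 1) = d := by omega
    have e3 : (m + 1 + 1) * (m + 1) / 2 = (m + 1) * m / 2 + (m + 1) := by
      rw [show (m + 1 + 1) * (m + 1) = (m + 1) * m + (m + 1) * 2 by ring]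
      exact Nat.add_mul_div_right _ _ (by norm_num)
    rw [e1, e2, e3, ← add_assoc (m + 1 + d) m 1, qPoch_succ, qPoch_succ, Nat.add_sub_cancel]
    have a1 := qPoch_ne hq0 hq1 d
    have a2 := qPoch_ne hq0 hq1 (m + 1 + d + m)
    have a3 := one_sub_pow_ne hq0 hq1 d
    have a4 := one_sub_pow_ne hq0 hq1 (m + 1 + d + m)
    generalize qPoch q q d = A at *
    generalize qPoch q q (m + 1 + d + m) = B at *
    rw [pow_add q ((m + 1) * m / 2)]
    generalize q ^ ((m + 1) * m / 2) = t at *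
    field_simp
    ring

lemma Tkn_zero {q : ℝ} (hq0 : 0 < q) (hq1 : q < 1) (n : ℕ) (hn : 1 ≤ n) : Tkn q 0 n = 0 := by
  have := partial_sum hq0 hq1 n n hn le_rfl
  simp only [Nat.sub_self, pow_zero, sub_self, mul_zero, zero_div] at this
  simp only [Tkn, pow_zero, mul_one]
  rw [if_neg (by omega), this, mul_zero]

/-- At `n = 0` the general formula for `T(k,n)` also gives `1`. -/
lemma Tkn_eq (q : ℝ) (k n : ℕ) : Tkn q k n =
    q ^ n * (1 / qPoch q q n ^ 2 +
      ∑ j ∈ Finset.Icc 1 n, (-1 : ℝ) ^ j * q ^ (j * (j - 1) / 2) * (1 + q ^ j) /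
        (qPoch q q (n - j) * qPoch q q (n + j)) * ((q ^ j + q⁻¹ ^ j) / 2) ^ k) := by
  rcases eq_or_ne n 0 with rfl | h
  · simp [Tkn, qPoch]
  · rw [Tkn, if_neg h]

lemma Tkn_succ {q : ℝ} (hq0 : 0 < q) (hq1 : q < 1) (k n : ℕ) :
    Tkn q (k + 1) (n + 1) = (q ^ (n + 1) + q⁻¹ ^ (n + 1)) / 2 * Tkn q k (n + 1)
        - q⁻¹ ^ n / 2 * Tkn q k n := by
  have hq := hq0.ne'
  have b := qPoch_ne hq0 hq1
  have c := one_sub_pow_ne hq0 hq1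
  rw [Tkn_eq, Tkn_eq, Tkn_eq, Finset.sum_Icc_succ_top (by omega), Finset.sum_Icc_succ_top (by omega)]
  have key : ∑ j ∈ Finset.Icc 1 n, (-1 : ℝ) ^ j * q ^ (j * (j - 1) / 2) * (1 + q ^ j) /
        (qPoch q q (n + 1 - j) * qPoch q q (n + 1 + j)) * ((q ^ j + q⁻¹ ^ j) / 2) ^ (k + 1) =
      (q ^ (n + 1) + q⁻¹ ^ (n + 1)) / 2 *
        ∑ j ∈ Finset.Icc 1 n, (-1 : ℝ) ^ j * q ^ (j * (j - 1) / 2) * (1 + q ^ j) /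
        (qPoch q q (n + 1 - j) * qPoch q q (n + 1 + j)) * ((q ^ j + q⁻¹ ^ j) / 2) ^ k -
      q⁻¹ ^ (n + 1) / 2 *
        ∑ j ∈ Finset.Icc 1 n, (-1 : ℝ) ^ j * q ^ (j * (j - 1) / 2) * (1 + q ^ j) /
        (qPoch q q (n - j) * qPoch q q (n + j)) * ((q ^ j + q⁻¹ ^ j) / 2) ^ k := by
    rw [Finset.mul_sum, Finset.mul_sum, ← Finset.sum_sub_distrib]
    refine Finset.sum_congr rfl fun j hj => ?_
    obtain ⟨d, rfl⟩ := Nat.exists_eq_add_of_le (Finset.mem_Icc.1 hj).2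
    have e1 : j + d + 1 - j = d + 1 := by omega
    have e2 : j + d - j = d := by omega
    have e3 : j + d + 1 + j = j + d + j + 1 := by omega
    rw [e1, e2, e3, qPoch_succ, qPoch_succ, pow_succ ((q ^ j + q⁻¹ ^ j) / 2)]
    have a1 := b d
    have a2 := b (j + d + j)
    have a3 := c d
    have a4 := c (j + d + j)
    generalize qPoch q q d = A at *
    generalize qPoch q q (j + d + j) = B at *
    generalize ((q ^ j + q⁻¹ ^ j) / 2) ^ k = C
    generalize q ^ (j * (j - 1) / 2) = t
    rw [inv_pow, inv_pow]
    field_simp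
    ring
  have key0 : 1 / qPoch q q (n + 1) ^ 2 =
      (q ^ (n + 1) + q⁻¹ ^ (n + 1)) / 2 * (1 / qPoch q q (n + 1) ^ 2) -
      q⁻¹ ^ (n + 1) / 2 * (1 / qPoch q q n ^ 2) := by
    rw [qPoch_succ]
    have a1 := b n
    have a3 := c n
    generalize qPoch q q n = A at *
    rw [inv_pow]
    field_simp
    ring
  have hqn : q⁻¹ ^ n * q ^ n = q⁻¹ ^ (n + 1) * q ^ (n + 1) := by
    rw [← mul_pow, ← mul_pow, inv_mul_cancel₀ hq, one_pow, one_pow]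
  rw [key]
  -- the terms with `j = n + 1` cancel, leaving a combination of `key0` and `hqn`
  generalize ∑ j ∈ Finset.Icc 1 n, (-1 : ℝ) ^ j * q ^ (j * (j - 1) / 2) * (1 + q ^ j) /
        (qPoch q q (n - j) * qPoch q q (n + j)) * ((q ^ j + q⁻¹ ^ j) / 2) ^ k = S at *
  rw [pow_succ ((q ^ (n + 1) + q⁻¹ ^ (n + 1)) / 2)]
  linear_combination q ^ (n + 1) * key0 + (1 / qPoch q q n ^ 2 + S) / 2 * hqn

theorem stmt1 (q : ℝ) (hq0 : 0 < q) (hq1 : q < 1) :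
    (∀ k n : ℕ, 1 ≤ k → 1 ≤ n →
      Tkn q k n = (q ^ n + q⁻¹ ^ n) / 2 * Tkn q (k - 1) n
        - q ^ ((1 : ℤ) - (n : ℤ)) / 2 * Tkn q (k - 1) (n - 1)) ∧
    (∀ k n : ℕ, 0 ≤ (-1 : ℝ) ^ n * Tkn q k n) := by
  constructor
  · intro k n hk hn
    obtain ⟨k, rfl⟩ := Nat.exists_eq_add_of_le' hk
    obtain ⟨n, rfl⟩ := Nat.exists_eq_add_of_le' hn
    have e : q ^ ((1 : ℤ) - ((n + 1 : ℕ) : ℤ)) = q⁻¹ ^ n := by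
      rw [show (1 : ℤ) - ((n + 1 : ℕ) : ℤ) = -(n : ℤ) by push_cast; ring, zpow_neg, zpow_natCast,
        inv_pow]
    rw [e, Nat.add_sub_cancel, Nat.add_sub_cancel, Tkn_succ hq0 hq1]
  · intro k
    induction k with
    | zero =>
      rintro (_ | n)
      · simp [Tkn]
      · rw [Tkn_zero hq0 hq1 _ (by omega), mul_zero]
    | succ k ih =>
      rintro (_ | n)
      · simp [Tkn]
      · have h1 := mul_nonneg (by positivity : 0 ≤ (q ^ (n + 1) + q⁻¹ ^ (n + 1)) / 2) (ih (n + 1))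
        have h2 := mul_nonneg (by positivity : 0 ≤ q⁻¹ ^ n / 2) (ih n)
        rw [Tkn_succ hq0 hq1]
        rw [pow_succ (-1 : ℝ)] at h1 ⊢
        linarith
end
end
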